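/- For every random variable Z ∈ L^1 there exists a random variable W, bounded from below, such that VaR_p(W) = ES_p(Z) for every p ∈ [0,1]; that is, every Expected Shortfall profile can be reproduced as a Value at Risk profile, and hence every benchmark-adjusted Expected Shortfall is also a quantile-adjusted Expected Shortfall. -/

import Mathlib

open MeasureTheory Set Filter

variable {Ω : Type*} [MeasurableSpace Ω]

/-- An atomless probability space: every set of positive measure has a subset of
strictly smaller positive measure. -/
def Atomless (μ : Measure Ω) : Prop :=
  ∀ A : Set Ω, MeasurableSet A → 0 < μ A →
    ∃ B : Set Ω, MeasurableSet B ∧ B ⊆ A ∧ 0 < μ B ∧ μ B < μ A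

/-- Value at Risk at level `p`: the left `p`-quantile for `p ∈ (0,1]`, the essential
infimum for `p = 0`.  Values are extended reals. -/
noncomputable def VaR (μ : Measure Ω) (X : Ω → ℝ) (p : ℝ) : EReal :=
  if p = 0 then essInf (fun ω => (X ω : EReal)) μ
  else sInf ((fun x : ℝ => (x : EReal)) '' {x : ℝ | ENNReal.ofReal p ≤ μ {ω | X ω ≤ x}})

/-- Real-valued version of the left `p`-quantile, used as the integrand of ES. -/
noncomputable def VaRr (μ : Measure Ω) (X : Ω → ℝ) (p : ℝ) : ℝ :=
  sInf {x : ℝ | ENNReal.ofReal p ≤ μ {ω | X ω ≤ x}}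

/-- Expected Shortfall at level `p`: `(1/(1-p)) ∫_p^1 VaR_q(X) dq` for `p ∈ [0,1)`,
the essential supremum for `p = 1`. -/
noncomputable def ES (μ : Measure Ω) (X : Ω → ℝ) (p : ℝ) : EReal :=
  if p = 1 then essSup (fun ω => (X ω : EReal)) μ
  else (((1 - p)⁻¹ * ∫ q in Set.Ioo p 1, VaRr μ X q : ℝ) : EReal)

/-- The `g`-adjusted Expected Shortfall, `sup_{p ∈ [0,1]} (ES_p(X) - g(p))`.
Note that in `EReal` one has `⊤ - ⊤ = ⊥`, matching the convention `∞ - ∞ = -∞`. -/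
noncomputable def adjES (μ : Measure Ω) (g : ℝ → EReal) (X : Ω → ℝ) : EReal :=
  ⨆ p ∈ Set.Icc (0:ℝ) 1, (ES μ X p - g p)

/-- The class `𝒢` of risk profiles: increasing functions `[0,1] → (-∞,∞]` that are
not identically `∞`. -/
def IsRiskProfile (g : ℝ → EReal) : Prop :=
  MonotoneOn g (Set.Icc (0:ℝ) 1) ∧ (∀ p ∈ Set.Icc (0:ℝ) 1, g p ≠ ⊥) ∧
    ∃ p ∈ Set.Icc (0:ℝ) 1, g p ≠ ⊤

/-- Second-order stochastic dominance: `SSD μ X Y` means `X ≥_SSD Y`, i.e. every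
risk-averse agent prefers `X` to `Y` (positive values are losses). -/
def SSD (μ : Measure Ω) (X Y : Ω → ℝ) : Prop :=
  ∀ u : ℝ → ℝ, Monotone u → ConcaveOn ℝ Set.univ u →
    ∫ ω, u (-(Y ω)) ∂μ ≤ ∫ ω, u (-(X ω)) ∂μ

/-- The inf-convolution of the functionals `ρ_1, …, ρ_n`. -/
noncomputable def infConv (μ : Measure Ω) {n : ℕ} (ρ : Fin n → ((Ω → ℝ) → EReal))
    (X : Ω → ℝ) : EReal :=
  ⨅ (Y : Fin n → Ω → ℝ) (_ : (∀ i, Integrable (Y i) μ) ∧ ∀ ω, (∑ i, Y i ω) = X ω),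
    ∑ i, ρ i (Y i)

/-- The class `𝒢_VaR`: risk profiles finite on `[0,1)`, left-continuous on `[0,1]`
and right-continuous at `0`. -/
def GVaRProfile (g : ℝ → EReal) : Prop :=
  IsRiskProfile g ∧ (∀ p ∈ Set.Ico (0:ℝ) 1, g p ≠ ⊤) ∧
    (∀ p ∈ Set.Ioc (0:ℝ) 1, Filter.Tendsto g (nhdsWithin p (Set.Ico 0 p)) (nhds (g p))) ∧
    Filter.Tendsto g (nhdsWithin 0 (Set.Ioc 0 1)) (nhds (g 0))

/-- The class `𝒢_ES`: profiles in `𝒢_VaR` such that `h_g(p) = (1-p)g(p)` is concave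
on `(0,1)` and left-continuous at `1` (with `h_g(1) = 0` by the convention `0·∞ = 0`). -/
def GESProfile (g : ℝ → EReal) : Prop :=
  GVaRProfile g ∧ ConcaveOn ℝ (Set.Ioo (0:ℝ) 1) (fun p => (1 - p) * (g p).toReal) ∧
    Filter.Tendsto (fun p => (1 - p) * (g p).toReal) (nhdsWithin 1 (Set.Ico (0:ℝ) 1)) (nhds 0)

open Topology in
theorem ae_sup_exists (μ : Measure Ω) [IsProbabilityMeasure μ] (S : Set (Set Ω))
    (hS : ∀ D ∈ S, MeasurableSet D) (hne : S.Nonempty)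
    (htot : ∀ D ∈ S, ∀ E ∈ S, D ≤ᵐ[μ] E ∨ E ≤ᵐ[μ] D) :
    ∃ A : Set Ω, MeasurableSet A ∧ (∀ D ∈ S, D ≤ᵐ[μ] A) ∧
      (∀ E : Set Ω, (∀ D ∈ S, D ≤ᵐ[μ] E) → A ≤ᵐ[μ] E) ∧
      ∀ t, (∀ D ∈ S, μ D ≤ t) → μ A ≤ t := by
  have key : ∀ D ∈ S, ∀ E ∈ S, μ D ≤ μ E → D ≤ᵐ[μ] E := by
    intro D hD E hE h
    rcases htot D hD E hE with h1 | h1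
    · exact h1
    · exact (ae_eq_of_ae_subset_of_measure_ge h1 h (hS E hE).nullMeasurableSet
        (measure_ne_top _ _)).symm.le
  obtain ⟨u, humono, hulim, huS⟩ := exists_seq_tendsto_sSup (hne.image μ) (OrderTop.bddAbove _)
  choose A hAS hAu using huS
  refine ⟨⋃ n, A n, MeasurableSet.iUnion fun n => hS _ (hAS n), ?_, ?_, ?_⟩
  · intro D hD
    by_cases h : ∃ n, D ≤ᵐ[μ] A n
    · obtain ⟨n, hn⟩ := h
      exact hn.trans (LE.le.eventuallyLE (subset_iUnion A n))
    · push Not at h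
      have h2 : ∀ n, A n ≤ᵐ[μ] D := fun n =>
        (htot D hD (A n) (hAS n)).resolve_left (h n)
      have h3 : (⋃ n, A n) ≤ᵐ[μ] D := by
        have := ae_all_iff.2 h2
        filter_upwards [this] with ω hω hx
        obtain ⟨n, hn⟩ := mem_iUnion.1 hx
        exact hω n hn
      refine (ae_eq_of_ae_subset_of_measure_ge h3 ?_ (MeasurableSet.iUnion fun n => hS _ (hAS n)).nullMeasurableSet
        (measure_ne_top _ _)).symm.le
      calc μ D ≤ sSup (μ '' S) := le_sSup (mem_image_of_mem _ hD)
        _ ≤ _ := le_of_tendsto' hulim fun n => by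
          rw [← hAu n]; exact measure_mono (subset_iUnion A n)
  · intro E hE
    have := ae_all_iff.2 fun n => hE _ (hAS n)
    filter_upwards [this] with ω hω hx
    obtain ⟨n, hn⟩ := mem_iUnion.1 hx
    exact hω n hn
  · intro t ht
    rw [measure_iUnion_eq_iSup_accumulate]
    refine iSup_le fun n => ?_
    refine le_trans (measure_mono_ae (?_ : _ ≤ᵐ[μ] A n)) (ht _ (hAS n))
    have h1 : ∀ i, ∀ᵐ ω ∂μ, i ≤ n → ω ∈ A i → ω ∈ A n := by
      intro i
      by_cases hi : i ≤ n
      · have := key _ (hAS i) _ (hAS n) (by rw [hAu, hAu]; exact humono hi)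
        filter_upwards [this] with ω hω _ hx using hω hx
      · exact Eventually.of_forall fun ω h => absurd h hi
    filter_upwards [ae_all_iff.2 h1] with ω hω hx
    obtain ⟨i, hi, hx⟩ := mem_accumulate.1 hx
    exact hω i hi hx

theorem chain_exists (μ : Measure Ω) [IsProbabilityMeasure μ] (hatomless : Atomless μ) :
    ∃ C : Set (Set Ω), (∀ D ∈ C, MeasurableSet D) ∧
      (∀ D ∈ C, ∀ E ∈ C, D ≤ᵐ[μ] E ∨ E ≤ᵐ[μ] D) ∧ ∀ t ≤ 1, ∃ D ∈ C, μ D = t := by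
  let r : {s : Set Ω // MeasurableSet s} → {s : Set Ω // MeasurableSet s} → Prop :=
    fun s t => s.1 ≤ᵐ[μ] t.1
  have hM : IsMaxChain r (maxChain r) := maxChain_spec
  set C : Set (Set Ω) := Subtype.val '' (maxChain r) with hC
  have hmeas : ∀ D ∈ C, MeasurableSet D := by
    rintro _ ⟨D, -, rfl⟩; exact D.2
  have htot : ∀ D ∈ C, ∀ E ∈ C, D ≤ᵐ[μ] E ∨ E ≤ᵐ[μ] D := by
    rintro _ ⟨D, hD, rfl⟩ _ ⟨E, hE, rfl⟩
    by_cases h : D = E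
    · subst h; exact Or.inl (EventuallyLE.refl _ _)
    · exact hM.1 hD hE h
  have hmax : ∀ E, MeasurableSet E → (∀ D ∈ C, D ≤ᵐ[μ] E ∨ E ≤ᵐ[μ] D) → E ∈ C := by
    intro E hE h
    refine ⟨⟨E, hE⟩, ?_, rfl⟩
    have := hM.2 (hM.1.insert (a := ⟨E, hE⟩) fun b hb _ => (h b.1 ⟨b, hb, rfl⟩).symm)
      (subset_insert _ _)
    rw [this]; exact mem_insert _ _
  have h0 : ∅ ∈ C := hmax _ MeasurableSet.empty fun D _ => Or.inr (empty_subset D).eventuallyLE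
  have h1 : univ ∈ C := hmax _ MeasurableSet.univ fun D _ => Or.inl (subset_univ D).eventuallyLE
  refine ⟨C, hmeas, htot, fun t ht => ?_⟩
  obtain ⟨A, hAm, hA1, hA2, hA3⟩ := ae_sup_exists μ {D | D ∈ C ∧ μ D ≤ t}
    (fun D hD => hmeas D hD.1) ⟨∅, h0, by simp⟩ (fun D hD E hE => htot D hD.1 E hE.1)
  obtain ⟨B, hBm, hB1, hB2, hB3⟩ := ae_sup_exists μ {D | Dᶜ ∈ C ∧ t ≤ μ Dᶜ}
    (fun D hD => (hmeas _ hD.1).of_compl) ⟨∅, by simpa using h1, by simpa using ht⟩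
    (fun D hD E hE => by
      rcases htot _ hD.1 _ hE.1 with h | h
      · right; simpa using h.compl
      · left; simpa using h.compl)
  have hAt : μ A ≤ t := hA3 t fun D hD => hD.2
  have hBt : μ B ≤ 1 - t := hB3 _ fun D hD => by
    have := hD.2
    rw [prob_compl_eq_one_sub (hmeas _ hD.1).of_compl] at this
    exact (ENNReal.le_sub_iff_add_le_right (measure_ne_top _ _) prob_le_one).1 this |> fun h =>
      ENNReal.le_sub_of_add_le_left (ne_top_of_le_ne_top ENNReal.one_ne_top ht) h
  have hup : ∀ D ∈ C, t ≤ μ D → (Bᶜ : Set Ω) ≤ᵐ[μ] D := by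
    intro D hD h
    have := hB1 Dᶜ ⟨by simpa using hD, by simpa using h⟩
    simpa using this.compl
  have hAB : A ≤ᵐ[μ] (Bᶜ : Set Ω) := by
    refine hA2 _ fun D hD => ?_
    have : B ≤ᵐ[μ] (Dᶜ : Set Ω) := by
      refine hB2 _ fun E hE => ?_
      rcases htot _ hD.1 _ hE.1 with h | h
      · simpa using h.compl
      · have := (ae_eq_of_ae_subset_of_measure_ge h (hD.2.trans hE.2)
          (hmeas _ hE.1).nullMeasurableSet (measure_ne_top _ _)).symm.le
        simpa using this.compl
    simpa using this.compl
  have hBt' : t ≤ μ Bᶜ := by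
    rw [prob_compl_eq_one_sub hBm]
    exact ENNReal.le_sub_of_add_le_left (measure_ne_top _ _)
      ((ENNReal.le_sub_iff_add_le_right (ne_top_of_le_ne_top ENNReal.one_ne_top ht) ht).1 hBt)
  have hmid : ∀ E, MeasurableSet E → A ≤ᵐ[μ] E → E ≤ᵐ[μ] (Bᶜ : Set Ω) → E ∈ C := by
    intro E hE h1 h2
    refine hmax E hE fun D hD => ?_
    rcases le_total (μ D) t with h | h
    · exact Or.inl ((hA1 D ⟨hD, h⟩).trans h1)
    · exact Or.inr (h2.trans (hup D hD h))
  by_contra hno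
  push Not at hno
  have hAC := hmid A hAm (EventuallyLE.refl _ _) hAB
  have hBC := hmid Bᶜ hBm.compl hAB (EventuallyLE.refl _ _)
  have hpos : 0 < μ (Bᶜ \ A) := by
    rw [pos_iff_ne_zero]
    intro h
    have : (Bᶜ : Set Ω) ≤ᵐ[μ] A := ae_le_set.2 h
    have h3 := measure_mono_ae this
    exact hno A hAC (le_antisymm hAt (hBt'.trans h3))
  obtain ⟨E, hEm, hEs, hE0, hE1⟩ := hatomless _ (hBm.compl.diff hAm) hpos
  have hAE : A ∪ E ∈ C := by
    refine hmid _ (hAm.union hEm) subset_union_left.eventuallyLE ?_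
    have := hEs.trans sdiff_subset
    filter_upwards [hAB] with ω hω hx
    rcases hx with hx | hx
    · exact hω hx
    · exact this hx
  rcases le_total (μ (A ∪ E)) t with h | h
  · have := ae_le_set.1 (hA1 _ ⟨hAE, h⟩)
    have h2 : E ⊆ (A ∪ E) \ A := fun x hx => ⟨Or.inr hx, (hEs hx).2⟩
    exact hE0.ne' (measure_mono_null h2 this)
  · have := ae_le_set.1 (hup _ hAE h)
    have h2 : (Bᶜ \ A) ⊆ E ∪ (Bᶜ \ (A ∪ E)) := by
      intro x hx
      by_cases hxE : x ∈ E
      · exact Or.inl hxE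
      · exact Or.inr ⟨hx.1, fun h => h.elim hx.2 hxE⟩
    have h3 := (measure_mono h2).trans (measure_union_le (μ := μ) _ _)
    rw [this, add_zero] at h3
    exact absurd hE1 (not_lt.2 h3)

theorem uniform_exists (μ : Measure Ω) [IsProbabilityMeasure μ] (hatomless : Atomless μ) :
    ∃ U : Ω → ℝ, Measurable U ∧ (∀ ω, 0 ≤ U ω) ∧
      ∀ t : ℝ, 0 ≤ t → t ≤ 1 → μ {ω | U ω < t} = ENNReal.ofReal t := by
  obtain ⟨C, hmeas, htot, hex⟩ := chain_exists μ hatomless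
  have hex' : ∀ q : {q : ℚ // 0 ≤ q ∧ q ≤ 1}, ∃ D ∈ C, μ D = ENNReal.ofReal (q.1 : ℝ) := by
    intro q
    apply hex
    rw [ENNReal.ofReal_le_one]
    exact_mod_cast q.2.2
  choose D hDC hDμ using hex'
  have hmono : ∀ q q' : {q : ℚ // 0 ≤ q ∧ q ≤ 1}, q.1 ≤ q'.1 → D q ≤ᵐ[μ] D q' := by
    intro q q' h
    rcases htot _ (hDC q) _ (hDC q') with h1 | h1
    · exact h1
    · refine (ae_eq_of_ae_subset_of_measure_ge h1 ?_ (hmeas _ (hDC q')).nullMeasurableSet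
        (measure_ne_top _ _)).symm.le
      rw [hDμ, hDμ]
      exact ENNReal.ofReal_le_ofReal (by exact_mod_cast h)
  classical
  let f : {q : ℚ // 0 ≤ q ∧ q ≤ 1} → Ω → ℝ := fun q ω => if ω ∈ D q then (q.1 : ℝ) else 1
  have : Nonempty {q : ℚ // 0 ≤ q ∧ q ≤ 1} := ⟨⟨0, by norm_num⟩⟩
  have hf0 : ∀ q ω, 0 ≤ f q ω := by
    intro q ω
    simp only [f]
    split_ifs
    · exact_mod_cast q.2.1
    · norm_num
  have hbdd : ∀ ω, BddBelow (range fun q => f q ω) := fun ω => ⟨0, by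
    rintro _ ⟨q, rfl⟩; exact hf0 q ω⟩
  refine ⟨fun ω => ⨅ q, f q ω, ?_, fun ω => le_ciInf fun q => hf0 q ω, ?_⟩
  · exact Measurable.iInf fun q => Measurable.ite (hmeas _ (hDC q)) measurable_const measurable_const
  intro t ht0 ht1
  have hset : {ω | ⨅ q, f q ω < t} = ⋃ q : {q : {q : ℚ // 0 ≤ q ∧ q ≤ 1} // (q.1 : ℝ) < t}, D q.1 := by
    ext ω
    simp only [mem_ofPred_eq, ciInf_lt_iff (hbdd ω), mem_iUnion]
    constructor
    · rintro ⟨q, hq⟩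
      by_cases h : ω ∈ D q
      · simp only [f, h, if_true] at hq
        exact ⟨⟨q, hq⟩, h⟩
      · simp only [f, h, if_false] at hq
        linarith
    · rintro ⟨q, hq⟩
      refine ⟨q.1, ?_⟩
      simp only [f, hq, if_true]
      exact q.2
  rw [hset]
  apply le_antisymm
  · rcases ht1.eq_or_lt with rfl | ht1
    · simpa using prob_le_one
    refine le_of_forall_gt_imp_ge_of_dense fun a ha => ?_
    obtain ⟨b, hb0, hb1⟩ := ENNReal.lt_iff_exists_real_btwn.1 ha
    obtain ⟨q, hq1, hq2⟩ := exists_rat_btwn (show t < min b 1 from lt_min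
      (by by_contra h; exact absurd (ENNReal.ofReal_le_ofReal (not_lt.1 h)) (not_le.2 hb1.1)) ht1)
    let q' : {q : ℚ // 0 ≤ q ∧ q ≤ 1} := ⟨q, by exact_mod_cast (ht0.trans hq1.le),
      by exact_mod_cast (hq2.le.trans (min_le_right _ _))⟩
    calc _ ≤ μ (D q') := by
          apply measure_mono_ae
          have : ∀ i : {q : {q : ℚ // 0 ≤ q ∧ q ≤ 1} // (q.1 : ℝ) < t}, D i.1 ≤ᵐ[μ] D q' :=
            fun i => hmono _ _ (by exact_mod_cast (i.2.trans hq1).le)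
          filter_upwards [ae_all_iff.2 this] with ω hω hx
          obtain ⟨n, hn⟩ := mem_iUnion.1 hx
          exact hω n hn
      _ = ENNReal.ofReal q := hDμ q'
      _ ≤ ENNReal.ofReal b := ENNReal.ofReal_le_ofReal (hq2.le.trans (min_le_left _ _))
      _ ≤ a := hb1.2.le
  · refine le_of_forall_lt_imp_le_of_dense fun a ha => ?_
    obtain ⟨b, hb0, hb1⟩ := ENNReal.lt_iff_exists_real_btwn.1 ha
    have hbt : b < t := by
      by_contra h
      exact absurd (ENNReal.ofReal_le_ofReal (not_lt.1 h)) (not_le.2 hb1.2)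
    obtain ⟨q, hq1, hq2⟩ := exists_rat_btwn hbt
    let q' : {q : ℚ // 0 ≤ q ∧ q ≤ 1} := ⟨q, by exact_mod_cast (hb0.trans hq1.le),
      by exact_mod_cast (hq2.le.trans ht1)⟩
    calc a ≤ ENNReal.ofReal b := hb1.1.le
      _ ≤ ENNReal.ofReal q := ENNReal.ofReal_le_ofReal hq1.le
      _ = μ (D q') := (hDμ q').symm
      _ ≤ _ := measure_mono (subset_iUnion (fun i : {q : {q : ℚ // 0 ≤ q ∧ q ≤ 1} // (q.1 : ℝ) < t} => D i.1) ⟨q', hq2⟩)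

open Topology in
theorem VaRr_le_iff (μ : Measure Ω) [IsProbabilityMeasure μ] (Z : Ω → ℝ) (hZ : AEMeasurable Z μ)
    {q : ℝ} (hq : q ∈ Ioo (0:ℝ) 1) (x : ℝ) :
    VaRr μ Z q ≤ x ↔ ENNReal.ofReal q ≤ μ {ω | Z ω ≤ x} := by
  have : IsProbabilityMeasure (μ.map Z) := Measure.isProbabilityMeasure_map hZ
  set G := ProbabilityTheory.cdf (μ.map Z) with hG
  have hF : ∀ x, μ {ω | Z ω ≤ x} = ENNReal.ofReal (G x) := by
    intro x
    rw [hG, ProbabilityTheory.ofReal_cdf, Measure.map_apply_of_aemeasurable hZ measurableSet_Iic]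
    rfl
  have hiff : ∀ x, ENNReal.ofReal q ≤ μ {ω | Z ω ≤ x} ↔ q ≤ G x := by
    intro x
    rw [hF, ENNReal.ofReal_le_ofReal_iff (ProbabilityTheory.cdf_nonneg _ _)]
  have hmono := ProbabilityTheory.monotone_cdf (μ.map Z)
  unfold VaRr
  simp only [hiff]
  have hne : {x | q ≤ G x}.Nonempty := by
    obtain ⟨a, ha⟩ := ((ProbabilityTheory.tendsto_cdf_atTop (μ.map Z)).eventually
      (lt_mem_nhds hq.2)).exists
    exact ⟨a, ha.le⟩
  have hbd : BddBelow {x | q ≤ G x} := by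
    obtain ⟨a, ha⟩ := ((ProbabilityTheory.tendsto_cdf_atBot (μ.map Z)).eventually
      (gt_mem_nhds hq.1)).exists
    refine ⟨a, fun x hx => ?_⟩
    by_contra h
    exact absurd (hmono (not_le.1 h).le) (not_le.2 (lt_of_lt_of_le ha hx))
  constructor
  · intro h
    refine le_trans ?_ (hmono h)
    have hrc : Tendsto G (𝓝[>] (sInf {x | q ≤ G x})) (𝓝 (G (sInf {x | q ≤ G x}))) :=
      (G.right_continuous _).mono_left (nhdsWithin_mono _ Ioi_subset_Ici_self)
    refine ge_of_tendsto hrc ?_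
    filter_upwards [self_mem_nhdsWithin] with y hy
    obtain ⟨z, hz, hzy⟩ := exists_lt_of_csInf_lt hne hy
    exact le_trans hz (hmono hzy.le)
  · intro h
    exact csInf_le hbd h

theorem VaRr_monotoneOn (μ : Measure Ω) [IsProbabilityMeasure μ] (Z : Ω → ℝ)
    (hZ : AEMeasurable Z μ) : MonotoneOn (VaRr μ Z) (Ioo 0 1) := by
  intro p hp q hq hpq
  rw [VaRr_le_iff μ Z hZ hp]
  exact (ENNReal.ofReal_le_ofReal hpq).trans ((VaRr_le_iff μ Z hZ hq _).1 le_rfl)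

theorem VaRr_integrable (μ : Measure Ω) [IsProbabilityMeasure μ] (Z : Ω → ℝ)
    (hZ : Integrable Z μ) : IntegrableOn (VaRr μ Z) (Ioo 0 1) := by
  have hZm := hZ.aemeasurable
  have hQm : AEMeasurable (VaRr μ Z) (volume.restrict (Ioo 0 1)) :=
    aemeasurable_restrict_of_monotoneOn measurableSet_Ioo (VaRr_monotoneOn μ Z hZm)
  have : IsProbabilityMeasure (μ.map Z) := Measure.isProbabilityMeasure_map hZm
  have hmap : μ.map Z = (volume.restrict (Ioo (0:ℝ) 1)).map (VaRr μ Z) := by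
    refine Measure.ext_of_Iic _ _ fun x => ?_
    rw [Measure.map_apply_of_aemeasurable hQm measurableSet_Iic,
      Measure.restrict_apply' measurableSet_Ioo]
    have hF : (μ.map Z) (Iic x) = μ {ω | Z ω ≤ x} := by
      rw [Measure.map_apply_of_aemeasurable hZm measurableSet_Iic]; rfl
    obtain ⟨g, hg0, hg⟩ : ∃ g : ℝ, 0 ≤ g ∧ μ {ω | Z ω ≤ x} = ENNReal.ofReal g :=
      ⟨(μ {ω | Z ω ≤ x}).toReal, ENNReal.toReal_nonneg, (ENNReal.ofReal_toReal (measure_ne_top _ _)).symm⟩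
    have hg1 : g ≤ 1 := by
      rw [← ENNReal.ofReal_le_one, ← hg]; exact prob_le_one
    have hset : VaRr μ Z ⁻¹' Iic x ∩ Ioo 0 1 = Ioo 0 1 ∩ Iic g := by
      ext q
      simp only [mem_inter_iff, mem_preimage, mem_Iic]
      rw [and_comm]
      refine and_congr_right fun hq => ?_
      rw [VaRr_le_iff μ Z hZm hq, hg, ENNReal.ofReal_le_ofReal_iff hg0]
    rw [hF, hset, hg]
    apply le_antisymm
    · calc ENNReal.ofReal g = volume (Ioo 0 g) := by simp
        _ ≤ volume (Ioo 0 1 ∩ Iic g) := measure_mono fun q hq => ⟨⟨hq.1, hq.2.trans_le hg1⟩, hq.2.le⟩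
    · calc _ ≤ volume (Ioc 0 g) := measure_mono fun q hq => ⟨hq.1.1, hq.2⟩
        _ = _ := by simp
  have h1 : Integrable (id : ℝ → ℝ) (μ.map Z) :=
    (integrable_map_measure aestronglyMeasurable_id hZm).2 hZ
  rw [hmap] at h1
  exact (integrable_map_measure aestronglyMeasurable_id hQm).1 h1

/-- facts on tail averages -/
theorem avg_facts (Q : ℝ → ℝ) (hm : MonotoneOn Q (Ioo 0 1)) (hi : IntegrableOn Q (Ioo 0 1)) :
    let h : ℝ → ℝ := fun p => (1 - p)⁻¹ * ∫ q in Ioo p 1, Q q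
    ContinuousOn h (Ico 0 1) ∧ MonotoneOn h (Ico 0 1) ∧ (∀ p ∈ Ioo (0:ℝ) 1, Q p ≤ h p) ∧
      ∀ x, (∀ q ∈ Ioo (0:ℝ) 1, Q q ≤ x) → ∀ p ∈ Ico (0:ℝ) 1, h p ≤ x := by
  intro h
  have hsub : ∀ p ∈ Ico (0:ℝ) 1, Ioo p 1 ⊆ Ioo 0 1 := fun p hp => Ioo_subset_Ioo_left hp.1
  have hconst : ∀ p q : ℝ, p ≤ q → ∀ c : ℝ, ∫ _ in Ioo p q, c = (q - p) * c := by
    intro p q hpq c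
    simp [hpq]
  have hlow : ∀ p ∈ Ioo (0:ℝ) 1, (1 - p) * Q p ≤ ∫ q in Ioo p 1, Q q := by
    intro p hp
    rw [← hconst p 1 hp.2.le]
    refine setIntegral_mono_on (integrableOn_const (by simp)) (hi.mono_set (hsub p ⟨hp.1.le, hp.2⟩))
      measurableSet_Ioo fun q hq => hm hp ⟨hp.1.trans hq.1, hq.2⟩ hq.1.le
  refine ⟨?_, ?_, ?_, ?_⟩
  · refine ContinuousOn.mul (ContinuousOn.inv₀ (by fun_prop) fun p hp => (sub_pos.2 hp.2).ne') ?_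
    have h1 : ContinuousOn (fun p => ∫ q in p..1, Q q) (uIcc 0 1) := by
      apply intervalIntegral.continuousOn_primitive_interval_left
      rw [uIcc_of_le zero_le_one, integrableOn_Icc_iff_integrableOn_Ioo]
      exact hi
    refine (h1.mono ?_).congr ?_
    · rw [uIcc_of_le zero_le_one]; exact Ico_subset_Icc_self
    · intro p hp
      simp only
      rw [intervalIntegral.integral_of_le hp.2.le, integral_Ioc_eq_integral_Ioo]
  · intro p hp p' hp' hpp
    rcases hpp.eq_or_lt with rfl | hlt
    · exact le_rfl
    have hp'0 : p' ∈ Ioo (0:ℝ) 1 := ⟨hp.1.trans_lt hlt, hp'.2⟩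
    have hsplit : ∫ q in Ioo p 1, Q q = (∫ q in Ioo p p', Q q) + ∫ q in Ioo p' 1, Q q := by
      rw [← integral_Ioc_eq_integral_Ioo (x := p) (y := p'), ← Ioc_union_Ioo_eq_Ioo hpp hp'.2]
      refine setIntegral_union ?_ measurableSet_Ioo (hi.mono_set (t := Ioo 0 1) ?_) (hi.mono_set (hsub p' hp'))
      · rw [Set.disjoint_left]; intro x hx hx'; exact absurd hx.2 (not_le.2 hx'.1)
      · intro x hx; exact ⟨hp.1.trans_lt hx.1, hx.2.trans_lt hp'.2⟩
    have hup : ∫ q in Ioo p p', Q q ≤ (p' - p) * Q p' := by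
      rw [← hconst p p' hpp]
      refine setIntegral_mono_on (hi.mono_set ?_) (integrableOn_const (by simp))
        measurableSet_Ioo fun q hq => hm ⟨hp.1.trans_lt hq.1, hq.2.trans hp'.2⟩ hp'0 hq.2.le
      intro x hx; exact ⟨hp.1.trans_lt hx.1, hx.2.trans hp'.2⟩
    have hl := hlow p' hp'0
    simp only [h]
    rw [hsplit]
    set I := ∫ q in Ioo p' 1, Q q
    have a1 : 0 < 1 - p := by linarith [hp.2]
    have a2 : 0 < 1 - p' := by linarith [hp'.2]
    rw [inv_mul_le_iff₀ a1, ← mul_assoc, mul_comm (1 - p), mul_assoc, ← div_eq_inv_mul,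
      le_div_iff₀ a2]
    have := mul_le_mul_of_nonneg_left hl (sub_nonneg.2 hpp)
    have := mul_le_mul_of_nonneg_left hup a2.le
    nlinarith
  · intro p hp
    have a1 : 0 < 1 - p := by linarith [hp.2]
    simp only [h]
    rw [← div_eq_inv_mul, le_div_iff₀ a1]
    linarith [hlow p hp]
  · intro x hx p hp
    have a1 : 0 < 1 - p := by linarith [hp.2]
    simp only [h]
    rw [inv_mul_le_iff₀ a1, ← hconst p 1 hp.2.le]
    exact setIntegral_mono_on (hi.mono_set (hsub p hp)) (integrableOn_const (by simp))
        measurableSet_Ioo fun q hq => hx q (hsub p hp hq)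

theorem sInf_coe_ge (y : EReal) : sInf ((fun x : ℝ => (x : EReal)) '' {x : ℝ | y ≤ x}) = y := by
  apply le_antisymm
  · rw [← EReal.le_of_forall_lt_iff_le]
    intro z hz
    exact sInf_le ⟨z, hz.le, rfl⟩
  · refine le_sInf ?_
    rintro _ ⟨x, hx, rfl⟩
    exact hx

theorem one_le_iff (a : ENNReal) : 1 ≤ a ↔ ∀ q ∈ Ioo (0:ℝ) 1, ENNReal.ofReal q ≤ a := by
  constructor
  · intro h q hq
    exact (ENNReal.ofReal_le_one.2 hq.2.le).trans h
  · intro h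
    refine le_of_forall_lt_imp_le_of_dense fun b hb => ?_
    obtain ⟨q, hq0, hq1⟩ := ENNReal.lt_iff_exists_real_btwn.1 hb
    have hlt : q < 1 := by
      by_contra hn
      exact absurd hq1.2 (not_lt.2 (ENNReal.one_le_ofReal.2 (not_lt.1 hn)))
    rcases hq0.eq_or_lt with rfl | hpos
    · simp at hq1
    · exact hq1.1.le.trans (h q ⟨hpos, hlt⟩)

/-- For every `Z ∈ L¹` there is a random variable `W` bounded from
below whose VaR profile reproduces the ES profile of `Z`: `VaR_p(W) = ES_p(Z)` for
every `p ∈ [0,1]`. -/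
theorem stmt15 (μ : Measure Ω) [IsProbabilityMeasure μ] (hatomless : Atomless μ)
    (Z : Ω → ℝ) (hZ : Integrable Z μ) :
    ∃ W : Ω → ℝ, Measurable W ∧ (∃ c : ℝ, ∀ ω, c ≤ W ω) ∧
      ∀ p ∈ Set.Icc (0:ℝ) 1, VaR μ W p = ES μ Z p := by
  classical
  obtain ⟨U, hUm, hU0, hUt⟩ := uniform_exists μ hatomless
  have hZm := hZ.aemeasurable
  obtain ⟨hcont, hmono, hQh, hhx⟩ := avg_facts (VaRr μ Z) (VaRr_monotoneOn μ Z hZm)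
    (VaRr_integrable μ Z hZ)
  set h : ℝ → ℝ := fun p => (1 - p)⁻¹ * ∫ q in Ioo p 1, VaRr μ Z q with hh
  let g : ℝ → ℝ := (Ico (0:ℝ) 1).piecewise h (fun _ => h 0)
  have hg : Measurable g := hcont.measurable_piecewise continuousOn_const measurableSet_Ico
  have h00 : (0:ℝ) ∈ Ico (0:ℝ) 1 := ⟨le_rfl, one_pos⟩
  have hgin : ∀ u ∈ Ico (0:ℝ) 1, g u = h u := fun u hu => piecewise_eq_of_mem _ _ _ hu
  have hg0 : ∀ u, h 0 ≤ g u := by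
    intro u
    by_cases hu : u ∈ Ico (0:ℝ) 1
    · rw [hgin u hu]; exact hmono h00 hu hu.1
    · exact (show g u = h 0 from piecewise_eq_of_notMem _ _ _ hu).ge
  have hU1 : ∀ᵐ ω ∂μ, U ω < 1 := by
    have := hUt 1 zero_le_one le_rfl
    rw [ENNReal.ofReal_one] at this
    exact (prob_compl_eq_zero_iff (measurableSet_lt hUm measurable_const)).2 this
  have hcond : ∀ p ∈ Ioo (0:ℝ) 1, ∀ x : ℝ, ENNReal.ofReal p ≤ μ {ω | g (U ω) ≤ x} ↔ h p ≤ x := by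
    intro p hp x
    have hpI : p ∈ Ico (0:ℝ) 1 := ⟨hp.1.le, hp.2⟩
    constructor
    · intro hle
      by_contra hx
      rw [not_le] at hx
      have hev := (hcont p hpI).eventually (lt_mem_nhds hx)
      have hev2 : ∀ᶠ y in nhdsWithin p (Ico 0 p), x < h y :=
        hev.filter_mono (nhdsWithin_mono _ (Ico_subset_Ico_right hp.2.le))
      have : (nhdsWithin p (Ico 0 p)).NeBot := by
        rw [nhdsWithin_Ico_eq_nhdsLT hp.1]; infer_instance
      obtain ⟨p', hp'x, hp'⟩ := (hev2.and self_mem_nhdsWithin).exists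
      have hle2 : μ {ω | g (U ω) ≤ x} ≤ μ {ω | U ω < p'} := by
        apply measure_mono_ae
        filter_upwards [hU1] with ω hω hx'
        have hx'' : g (U ω) ≤ x := hx'
        rw [hgin _ ⟨hU0 ω, hω⟩] at hx''
        show U ω < p'
        by_contra hn
        have := hmono ⟨hp'.1, hp'.2.trans hp.2⟩ ⟨hU0 ω, hω⟩ (not_lt.1 hn)
        linarith
      rw [hUt p' hp'.1 (hp'.2.trans hp.2).le] at hle2
      have := hle.trans hle2
      rw [ENNReal.ofReal_le_ofReal_iff hp'.1] at this
      linarith [hp'.2]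
    · intro hx
      rw [← hUt p hp.1.le hp.2.le]
      refine measure_mono fun ω hω => ?_
      have hω' : U ω < p := hω
      have hI : U ω ∈ Ico (0:ℝ) 1 := ⟨hU0 ω, hω'.trans hp.2⟩
      show g (U ω) ≤ x
      rw [hgin _ hI]
      exact (hmono hI hpI hω'.le).trans hx
  refine ⟨fun ω => g (U ω), hg.comp hUm, ⟨h 0, fun ω => hg0 _⟩, fun p hp => ?_⟩
  rcases eq_or_ne p 0 with rfl | hp0
  · simp only [VaR, ES, if_true, zero_ne_one, if_false]
    change _ = ((h 0 : ℝ) : EReal)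
    apply le_antisymm
    · rw [← EReal.le_of_forall_lt_iff_le]
      intro z hz
      by_contra hn
      rw [not_le] at hn
      have hae := ae_lt_of_lt_essInf hn
      have hz' : h 0 < z := by exact_mod_cast hz
      have hev : ∀ᶠ y in nhdsWithin 0 (Ioo 0 1), h y < z :=
        ((hcont 0 h00).eventually (gt_mem_nhds hz')).filter_mono
          (nhdsWithin_mono _ Ioo_subset_Ico_self)
      have : (nhdsWithin (0:ℝ) (Ioo 0 1)).NeBot := by
        rw [nhdsWithin_Ioo_eq_nhdsGT one_pos]; infer_instance
      obtain ⟨p', hp'x, hp'⟩ := (hev.and self_mem_nhdsWithin).exists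
      have h1 := (hcond p' hp' z).2 hp'x.le
      have h2 : μ {ω | g (U ω) ≤ z} = 0 := by
        refine measure_mono_null ?_ (ae_iff.1 hae)
        intro ω hω
        have hω' : g (U ω) ≤ z := hω
        simpa using hω'
      rw [h2] at h1
      simp at h1
      linarith [hp'.1]
    · exact le_essInf_of_ae_le _ (Eventually.of_forall fun ω => EReal.coe_le_coe_iff.2 (hg0 _))
  rcases eq_or_ne p 1 with rfl | hp1
  · simp only [VaR, ES, if_true, one_ne_zero, if_false]
    rw [← sInf_coe_ge (essSup _ μ)]
    congr 2
    ext x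
    simp only [mem_ofPred_eq, ENNReal.ofReal_one]
    rw [one_le_iff]
    have e1 : (∀ q ∈ Ioo (0:ℝ) 1, ENNReal.ofReal q ≤ μ {ω | g (U ω) ≤ x}) ↔
        ∀ q ∈ Ioo (0:ℝ) 1, ENNReal.ofReal q ≤ μ {ω | Z ω ≤ x} := by
      constructor
      · intro H q hq
        rw [← VaRr_le_iff μ Z hZm hq]
        exact (hQh q hq).trans ((hcond q hq x).1 (H q hq))
      · intro H q hq
        rw [hcond q hq]
        exact hhx x (fun r hr => (VaRr_le_iff μ Z hZm hr x).2 (H r hr)) q ⟨hq.1.le, hq.2⟩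
    rw [e1, ← one_le_iff]
    have hnull : NullMeasurableSet {ω | Z ω ≤ x} μ := nullMeasurableSet_le hZm aemeasurable_const
    have e2 : 1 ≤ μ {ω | Z ω ≤ x} ↔ ∀ᵐ ω ∂μ, Z ω ≤ x := by
      rw [← prob_compl_eq_zero_iff₀ hnull |>.trans (⟨fun h => h.ge, fun h => le_antisymm prob_le_one h⟩ : μ {ω | Z ω ≤ x} = 1 ↔ 1 ≤ μ {ω | Z ω ≤ x})]
      rfl
    rw [e2]
    constructor
    · intro H
      exact essSup_le_of_ae_le _ (H.mono fun ω hω => EReal.coe_le_coe_iff.2 hω)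
    · intro H
      filter_upwards [ae_le_essSup (f := fun ω => (Z ω : EReal)) (μ := μ)] with ω hω
      exact_mod_cast hω.trans H
  · have hpI : p ∈ Ioo (0:ℝ) 1 := ⟨lt_of_le_of_ne hp.1 hp0.symm, lt_of_le_of_ne hp.2 hp1⟩
    simp only [VaR, ES, hp0, hp1, if_false]
    change _ = ((h p : ℝ) : EReal)
    rw [← sInf_coe_ge (h p : EReal)]
    congr 2
    ext x
    simp only [mem_ofPred_eq]
    rw [hcond p hpI, EReal.coe_le_coe_iff]
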